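/- Soundness of rule L2: Let K be a statistical ALC knowledge base, C₁, C₂ ALC concepts, and m₁, m₂ rationals in [0,1] such that K ⊨_l (C₁|⊤)[m₁,1] and K ⊨_l (C₂|⊤)[m₂,1]. Then K ⊨_l (C₁ ⊓ C₂|⊤)[max(0, m₁ + m₂ − 1), 1]. In particular, if every model of K additionally satisfies the GCI C₁ ⊓ C₂ ⊑ D, then K ⊨_l (D|⊤)[max(0, m₁ + m₂ − 1), 1]. -/

import Mathlib

open scoped Classical

/-- ALC concepts over concept names and role names (both drawn from ℕ,
regarded as disjoint name spaces). -/
inductive Cpt : Type where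
  | top : Cpt
  | atom : ℕ → Cpt
  | neg : Cpt → Cpt
  | inter : Cpt → Cpt → Cpt
  | ex : ℕ → Cpt → Cpt
deriving DecidableEq

/-- A finite interpretation with domain drawn from the type `α`. -/
structure Interp (α : Type) where
  dom : Finset α
  dom_nonempty : dom.Nonempty
  conc : ℕ → Finset α
  conc_sub : ∀ a, conc a ⊆ dom
  role : ℕ → Finset (α × α)
  role_sub : ∀ r, role r ⊆ dom ×ˢ dom

/-- The extension `C^I` of a concept. -/
noncomputable def Interp.ext {α : Type} (I : Interp α) : Cpt → Finset α
  | .top => I.dom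
  | .atom a => I.conc a
  | .neg c => I.dom \ I.ext c
  | .inter c d => I.ext c ∩ I.ext d
  | .ex r c => I.dom.filter (fun d => ∃ e ∈ I.ext c, (d, e) ∈ I.role r)

/-- `[C]^I`, the cardinality of the extension of `C`. -/
noncomputable def cardC {α : Type} (I : Interp α) (c : Cpt) : ℕ := (I.ext c).card

/-- A probabilistic conditional `(C|D)[l,u]`. -/
structure Cond : Type where
  C : Cpt
  D : Cpt
  l : ℚ
  u : ℚ
deriving DecidableEq

/-- `I ⊨ (C|D)[l,u]` iff `[D]^I = 0` or `l ≤ [C ⊓ D]^I/[D]^I ≤ u`. -/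
def satCond {α : Type} (I : Interp α) (κ : Cond) : Prop :=
  cardC I κ.D = 0 ∨
    (κ.l ≤ (cardC I (.inter κ.C κ.D) : ℚ) / (cardC I κ.D : ℚ) ∧
     (cardC I (.inter κ.C κ.D) : ℚ) / (cardC I κ.D : ℚ) ≤ κ.u)

/-- Finite interpretations (with domain drawn from the countable set ℕ). -/
abbrev FInterp := Interp ℕ

/-- The models of a knowledge base (finite set of conditionals). -/
def Models (K : Finset Cond) : Set FInterp := {I | ∀ κ ∈ K, satCond I κ}

/-- l-entailment: every model of `K` satisfies the conditional. -/
def entailsL (K : Finset Cond) (κ : Cond) : Prop := ∀ I ∈ Models K, satCond I κ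

theorem L2_core {α : Type} (I : Interp α) (C1 C2 D : Cpt) (m1 m2 : ℚ)
    (a1 : satCond I ⟨C1, .top, m1, 1⟩) (a2 : satCond I ⟨C2, .top, m2, 1⟩)
    (hs : I.ext (.inter C1 C2) ⊆ I.ext D) :
    satCond I ⟨D, .top, max 0 (m1 + m2 - 1), 1⟩ := by
  have hn : 0 < I.dom.card := I.dom_nonempty.card_pos
  have hnq : (0 : ℚ) < (I.dom.card : ℚ) := by exact_mod_cast hn
  simp only [satCond, cardC, Interp.ext] at a1 a2 hs ⊢
  right
  replace a1 := (a1.resolve_left hn.ne').1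
  replace a2 := (a2.resolve_left hn.ne').1
  rw [le_div_iff₀ hnq] at a1 a2
  have hcard : ((I.ext D ∩ I.dom).card : ℚ) ≤ I.dom.card := by
    exact_mod_cast Finset.card_le_card Finset.inter_subset_right
  have h1 := Finset.card_union_add_card_inter (I.ext C1 ∩ I.dom) (I.ext C2 ∩ I.dom)
  have h2 : ((I.ext C1 ∩ I.dom) ∪ (I.ext C2 ∩ I.dom)).card ≤ I.dom.card :=
    Finset.card_le_card (Finset.union_subset Finset.inter_subset_right Finset.inter_subset_right)
  have h3 : ((I.ext C1 ∩ I.dom) ∩ (I.ext C2 ∩ I.dom)).card ≤ (I.ext D ∩ I.dom).card := by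
    apply Finset.card_le_card
    intro x hx
    simp only [Finset.mem_inter] at hx ⊢
    exact ⟨hs (Finset.mem_inter.2 ⟨hx.1.1, hx.2.1⟩), hx.1.2⟩
  have h4 : (I.ext C1 ∩ I.dom).card + (I.ext C2 ∩ I.dom).card
      ≤ I.dom.card + (I.ext D ∩ I.dom).card := by omega
  have h5 : ((I.ext C1 ∩ I.dom).card : ℚ) + (I.ext C2 ∩ I.dom).card
      ≤ I.dom.card + (I.ext D ∩ I.dom).card := by exact_mod_cast h4
  refine ⟨max_le (by positivity) ?_, ?_⟩
  · rw [le_div_iff₀ hnq]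
    linarith
  · rw [div_le_one hnq]
    exact hcard

theorem L2_aux (K : Finset Cond) (C1 C2 : Cpt) (m1 m2 : ℚ)
    (e1 : entailsL K ⟨C1, .top, m1, 1⟩) (e2 : entailsL K ⟨C2, .top, m2, 1⟩)
    (D : Cpt) (hD : ∀ I ∈ Models K, I.ext (.inter C1 C2) ⊆ I.ext D) :
    entailsL K ⟨D, .top, max 0 (m1 + m2 - 1), 1⟩ := by
  exact fun I hI => L2_core I C1 C2 D m1 m2 (e1 I hI) (e2 I hI) (hD I hI)

/-- Soundness of rule L2. -/
theorem rule_L2_sound (K : Finset Cond) (C1 C2 : Cpt) (m1 m2 : ℚ)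
    (h10 : 0 ≤ m1) (h11 : m1 ≤ 1) (h20 : 0 ≤ m2) (h21 : m2 ≤ 1)
    (e1 : entailsL K ⟨C1, .top, m1, 1⟩) (e2 : entailsL K ⟨C2, .top, m2, 1⟩) :
    entailsL K ⟨.inter C1 C2, .top, max 0 (m1 + m2 - 1), 1⟩ ∧
    (∀ D : Cpt, (∀ I ∈ Models K, I.ext (.inter C1 C2) ⊆ I.ext D) →
      entailsL K ⟨D, .top, max 0 (m1 + m2 - 1), 1⟩) := by
  exact ⟨L2_aux K C1 C2 m1 m2 e1 e2 _ (fun _ _ => Finset.Subset.refl _),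
    fun D hD => L2_aux K C1 C2 m1 m2 e1 e2 D hD⟩
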